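/- For every n ≥ 3, the toric ideal I_{C_n} of the n-cycle C_n is generated in degree ≤ 4 (indeed generated by its homogeneous elements of total degrees 2 and 4), and I_{C_n} is not generated in degree ≤ 3; consequently the Markov width satisfies μ(C_n) = 4. -/

import Mathlib

open MvPolynomial Finset

namespace BinaryGraphModels

variable {V : Type} [Fintype V] [DecidableEq V]

/-- The monomial map `φ_G` of the binary graph model: the variable `p_I` is sent to the
product over edges `{j,k}` of the variable `t^{jk}_{I(j)I(k)}` (encoded as the unordered pair
`{(j, I j), (k, I k)}`) times the product over isolated vertices `l` of `t^{l}_{I(l)}`. -/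
noncomputable def phi (G : SimpleGraph V) :
    MvPolynomial (V → Bool) ℂ →ₐ[ℂ] MvPolynomial (Sym2 (V × Bool) ⊕ (V × Bool)) ℂ := by
  letI : DecidableRel G.Adj := Classical.decRel _
  exact aeval fun I : V → Bool =>
    (∏ e ∈ G.edgeFinset,
      (X (Sum.inl (Sym2.map (fun v => (v, I v)) e)) :
        MvPolynomial (Sym2 (V × Bool) ⊕ (V × Bool)) ℂ)) *
    ∏ l ∈ univ.filter (fun l : V => ∀ k, ¬ G.Adj l k), X (Sum.inr (l, I l))

/-- The toric ideal `I_G` of the binary graph model of `G`. -/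
noncomputable def toricIdeal (G : SimpleGraph V) : Ideal (MvPolynomial (V → Bool) ℂ) :=
  RingHom.ker (phi G).toRingHom

/-- `I_G` is generated in degree at most `d`. -/
def GenInDegLE (G : SimpleGraph V) (d : ℕ) : Prop :=
  toricIdeal G =
    Ideal.span {f : MvPolynomial (V → Bool) ℂ | f ∈ toricIdeal G ∧ f.totalDegree ≤ d}

/-- The Markov width `μ(G)`: the least `d` such that `I_G` is generated in degree `≤ d`. -/
noncomputable def markovWidth (G : SimpleGraph V) : ℕ :=
  sInf {d : ℕ | GenInDegLE G d}

/-- `f` is a minimal generator of `I_G`, i.e. `f ∈ I_G` and `f ∉ 𝔪 · I_G` where `𝔪` is the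
irrelevant maximal ideal generated by all the variables. -/
def IsMinimalGenerator (G : SimpleGraph V) (f : MvPolynomial (V → Bool) ℂ) : Prop :=
  f ∈ toricIdeal G ∧
    f ∉ Ideal.span (Set.range (X : (V → Bool) → MvPolynomial (V → Bool) ℂ)) * toricIdeal G

/-- Two integer tables have the same `G`-marginals: equal two-way marginals along every edge
and equal one-way marginals at every isolated vertex. -/
def MarginalsEq (G : SimpleGraph V) (v₁ v₂ : (V → Bool) → ℤ) : Prop :=
  (∀ j k : V, G.Adj j k → ∀ a b : Bool,
    (∑ I : V → Bool, if I j = a ∧ I k = b then v₁ I else 0) =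
    (∑ I : V → Bool, if I j = a ∧ I k = b then v₂ I else 0)) ∧
  (∀ l : V, (∀ k, ¬ G.Adj l k) → ∀ a : Bool,
    (∑ I : V → Bool, if I l = a then v₁ I else 0) =
    (∑ I : V → Bool, if I l = a then v₂ I else 0))

/-- `B` is a Markov basis for `G`: any two nonnegative tables with the same `G`-marginals are
connected by a path of moves from `±B` staying nonnegative. -/
def IsMarkovBasis (G : SimpleGraph V) (B : Finset ((V → Bool) → ℤ)) : Prop :=
  ∀ v₁ v₂ : (V → Bool) → ℤ, (∀ I, 0 ≤ v₁ I) → (∀ I, 0 ≤ v₂ I) →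
    MarginalsEq G v₁ v₂ →
    ∃ L : List ((V → Bool) → ℤ),
      (∀ u ∈ L, u ∈ B ∨ -u ∈ B) ∧
      v₁ + L.sum = v₂ ∧
      ∀ n : ℕ, n ≤ L.length → ∀ I, 0 ≤ (v₁ + (L.take n).sum) I

/-- The binomial `p^{u⁺} - p^{u⁻}` associated to an integer table `u`. -/
noncomputable def moveBinomial (u : (V → Bool) → ℤ) : MvPolynomial (V → Bool) ℂ :=
  (∏ I : V → Bool, X I ^ (u I).toNat) - ∏ I : V → Bool, X I ^ (-u I).toNat

end BinaryGraphModels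


/-!
Binomials in a toric ideal correspond to pairs of multisets of states with equal marginals, so
generating the ideal means connecting such pairs by small moves. Gluing two models along a common
marginal keeps the degrees of generators: moves lift from either side, and tables with the same
projections differ by quadratic swaps. Paths are hence quadratic.

A cycle is a path and a triangle glued along a chord, which is not an edge of the cycle. The
marginal along the chord is determined by the marginals at its ends and the number of states with
values `(1, 1)` there. A quadratic move changes this number by at most one, so on either side of the
chord some quadratic move raises it, and two such moves glue to a quadratic move of the cycle. This
levels the number for two tables. What remains is to glue a shorter cycle and a triangle along a
common edge, and the triangle needs a single quartic: the even states against the odd ones.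

Conversely, doubling a vertex turns a cycle into a longer one. The only tables with the marginals of
a doubled table are doubled tables, so the quartic of the triangle survives, and no nonzero element
of the ideal of degree at most three involves a monomial dividing one of its terms.
-/

namespace BinaryGraphModels

section Congruences

variable {Ω A B : Type*}

/-- The congruence of having the same marginal along `c`: equality of `s.map c` and `t.map c`. -/
def mapCon (c : Ω → A) : AddCon (Multiset Ω) :=
  AddCon.ker (Multiset.mapAddMonoidHom c)

lemma mapCon_iff {c : Ω → A} {s t : Multiset Ω} : mapCon c s t ↔ s.map c = t.map c :=
  Iff.rfl

lemma mapCon_eq_bot {c : Ω → A} (hc : Function.Injective c) : mapCon c = ⊥ :=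
  AddCon.ext fun _ _ => (Multiset.map_injective hc).eq_iff

lemma mapCon_comp_of_injective {g : A → B} (hg : Function.Injective g) (c : Ω → A) :
    mapCon (g ∘ c) = mapCon c :=
  AddCon.ext fun s t => by
    rw [mapCon_iff, mapCon_iff, ← Multiset.map_map, ← Multiset.map_map,
      (Multiset.map_injective hg).eq_iff]

lemma mapCon_le_comp (g : A → B) (c : Ω → A) : mapCon c ≤ mapCon (g ∘ c) := fun s t h => by
  rw [mapCon_iff, ← Multiset.map_map, ← Multiset.map_map, mapCon_iff.1 h]

/-- The congruence of having the same marginal along every feature `f i`. -/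
def marginalCon {ι : Type*} (f : ι → Ω → A) : AddCon (Multiset Ω) :=
  ⨅ i, mapCon (f i)

lemma marginalCon_iff {ι : Type*} {f : ι → Ω → A} {s t : Multiset Ω} :
    marginalCon f s t ↔ ∀ i, s.map (f i) = t.map (f i) := by
  simp [marginalCon, AddCon.coe_iInf, mapCon_iff]

/-- The congruence induced by `K₁` and `K₂` along two projections `p` and `q`. -/
def glueCon (p : Ω → A) (q : Ω → B) (K₁ : AddCon (Multiset A)) (K₂ : AddCon (Multiset B)) :
    AddCon (Multiset Ω) :=
  K₁.comap (Multiset.map p) (Multiset.map_add p) ⊓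
    K₂.comap (Multiset.map q) (Multiset.map_add q)

lemma glueCon_iff {p : Ω → A} {q : Ω → B} {K₁ : AddCon (Multiset A)} {K₂ : AddCon (Multiset B)}
    {s t : Multiset Ω} :
    glueCon p q K₁ K₂ s t ↔ K₁ (s.map p) (t.map p) ∧ K₂ (s.map q) (t.map q) :=
  Iff.rfl

lemma glueCon_comm (p : Ω → A) (q : Ω → B) (K₁ : AddCon (Multiset A))
    (K₂ : AddCon (Multiset B)) : glueCon p q K₁ K₂ = glueCon q p K₂ K₁ :=
  inf_comm _ _

lemma glueCon_mono {p : Ω → A} {q : Ω → B} {K₁ L₁ : AddCon (Multiset A)}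
    {K₂ L₂ : AddCon (Multiset B)} (h₁ : K₁ ≤ L₁) (h₂ : K₂ ≤ L₂) :
    glueCon p q K₁ K₂ ≤ glueCon p q L₁ L₂ :=
  fun _ _ h => glueCon_iff.2 ⟨h₁ (glueCon_iff.1 h).1, h₂ (glueCon_iff.1 h).2⟩

/-- A move of a congruence `K`: a pair of `K`-related multisets of equal size in `D`. It encodes
a binomial of degree in `D`. -/
def IsMove (K : AddCon (Multiset Ω)) (D : Set ℕ) (s t : Multiset Ω) : Prop :=
  K s t ∧ s.card = t.card ∧ s.card ∈ D

/-- The congruence of being connected by moves of `K` of sizes in `D`. -/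
def moveCon (K : AddCon (Multiset Ω)) (D : Set ℕ) : AddCon (Multiset Ω) :=
  addConGen (IsMove K D)

/-- The moves of `K` of sizes in `D` generate `K`, i.e. they form a Markov basis. -/
def GeneratedIn (K : AddCon (Multiset Ω)) (D : Set ℕ) : Prop :=
  K ≤ moveCon K D

variable {K L : AddCon (Multiset Ω)} {D E : Set ℕ} {s t : Multiset Ω}

lemma IsMove.symm (h : IsMove K D s t) : IsMove K D t s :=
  ⟨K.symm h.1, h.2.1.symm, h.2.1 ▸ h.2.2⟩

lemma IsMove.moveCon (h : IsMove K D s t) : moveCon K D s t :=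
  AddConGen.Rel.of s t h

lemma moveCon_le : moveCon K D ≤ K :=
  AddCon.addConGen_le.2 fun _ _ h => h.1

lemma moveCon_mono (hKL : K ≤ L) (hDE : D ⊆ E) : moveCon K D ≤ moveCon L E :=
  AddCon.addConGen_mono fun _ _ h => ⟨hKL h.1, h.2.1, hDE h.2.2⟩

lemma GeneratedIn.mono (h : GeneratedIn K D) (hDE : D ⊆ E) : GeneratedIn K E :=
  h.trans (moveCon_mono le_rfl hDE)

lemma generatedIn_bot (D : Set ℕ) : GeneratedIn (⊥ : AddCon (Multiset Ω)) D :=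
  bot_le (α := AddCon (Multiset Ω))

end Congruences

section FiberProducts

variable {Ω A B C : Type*}

lemma exists_add_of_map_eq_add {f : Ω → A} {s : Multiset Ω} {a b : Multiset A}
    (h : s.map f = a + b) : ∃ s₁ s₂, s = s₁ + s₂ ∧ s₁.map f = a ∧ s₂.map f = b := by
  rw [← Multiset.rel_eq, Multiset.rel_map_left, Multiset.rel_add_right] at h
  obtain ⟨s₁, s₂, h₁, h₂, rfl⟩ := h
  exact ⟨s₁, s₂, rfl, Multiset.rel_eq.1 (Multiset.rel_map_left.2 h₁),
    Multiset.rel_eq.1 (Multiset.rel_map_left.2 h₂)⟩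

/-- The square `c ∘ p = d ∘ q` exhibits `Ω` as the fibre product of `A` and `B` over `C`. -/
structure IsFiberProduct (p : Ω → A) (q : Ω → B) (c : A → C) (d : B → C) : Prop where
  comm : ∀ z, c (p z) = d (q z)
  exists_lift : ∀ a b, c a = d b → ∃ z, p z = a ∧ q z = b
  ext : ∀ z w, p z = p w → q z = q w → z = w

namespace IsFiberProduct

variable {p : Ω → A} {q : Ω → B} {c : A → C} {d : B → C}

lemma symm (h : IsFiberProduct p q c d) : IsFiberProduct q p d c where
  comm z := (h.comm z).symm
  exists_lift b a hba := (h.exists_lift a b hba.symm).imp fun _ hz => hz.symm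
  ext z w hq hp := h.ext z w hp hq

lemma map_comm (h : IsFiberProduct p q c d) (s : Multiset Ω) :
    (s.map p).map c = (s.map q).map d := by
  simp only [Multiset.map_map, Function.comp_def, h.comm]

lemma exists_glue (h : IsFiberProduct p q c d) {a : Multiset A} {b : Multiset B}
    (hab : a.map c = b.map d) : ∃ s : Multiset Ω, s.map p = a ∧ s.map q = b := by
  rw [← Multiset.rel_eq, Multiset.rel_map] at hab
  induction hab with
  | zero => exact ⟨0, rfl, rfl⟩
  | cons hxy _ ih =>
    obtain ⟨s, rfl, rfl⟩ := ih
    obtain ⟨z, rfl, rfl⟩ := h.exists_lift _ _ hxy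
    exact ⟨z ::ₘ s, Multiset.map_cons .., Multiset.map_cons ..⟩

variable {K₁ : AddCon (Multiset A)} {K₂ : AddCon (Multiset B)} {D : Set ℕ}

/-- If `p x = p z` and `q y = q z`, then `{x, y}` may be traded for `{z, w}`, where
`p w = p y` and `q w = q x`. -/
lemma exists_moveCon_cons (h : IsFiberProduct p q c d) (hD : 2 ∈ D) {s t : Multiset Ω} {z : Ω}
    (hp : s.map p = (z ::ₘ t).map p) (hq : s.map q = (z ::ₘ t).map q) :
    ∃ s', moveCon (glueCon p q K₁ K₂) D s (z ::ₘ s') ∧ s'.map p = t.map p ∧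
      s'.map q = t.map q := by
  suffices ∃ s', moveCon (glueCon p q K₁ K₂) D s (z ::ₘ s') ∧
      (z ::ₘ s').map p = s.map p ∧ (z ::ₘ s').map q = s.map q by
    obtain ⟨s', hs', hp', hq'⟩ := this
    refine ⟨s', hs', ?_, ?_⟩
    · simpa using hp'.trans hp
    · simpa using hq'.trans hq
  obtain ⟨x, hx, hxz⟩ : ∃ x ∈ s, p x = p z := Multiset.mem_map.1 (hp ▸ by simp)
  obtain ⟨y, hy, hyz⟩ : ∃ y ∈ s, q y = q z := Multiset.mem_map.1 (hq ▸ by simp)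
  obtain ⟨s, rfl⟩ := Multiset.exists_cons_of_mem hx
  rcases Multiset.mem_cons.1 hy with rfl | hy
  · obtain rfl := h.ext _ _ hxz hyz
    exact ⟨s, AddCon.refl _ _, rfl, rfl⟩
  obtain ⟨s, rfl⟩ := Multiset.exists_cons_of_mem hy
  obtain ⟨w, hwy, hwx⟩ : ∃ w, p w = p y ∧ q w = q x :=
    h.exists_lift _ _ (by rw [h.comm, hyz, ← h.comm, ← hxz, h.comm])
  have swap : IsMove (glueCon p q K₁ K₂) D {x, y} {z, w} := by
    have hpair : ({x, y} : Multiset Ω).map q = ({z, w} : Multiset Ω).map q := by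
      simp [Multiset.insert_eq_cons, hyz, hwx, Multiset.cons_swap (q x) _ 0, ← Multiset.cons_zero]
    refine ⟨glueCon_iff.2 ⟨?_, hpair ▸ K₂.refl _⟩, rfl, hD⟩
    simpa [Multiset.insert_eq_cons, hxz, hwy] using K₁.refl _
  refine ⟨w ::ₘ s, ?_, ?_, ?_⟩
  · simpa [Multiset.insert_eq_cons] using (moveCon _ D).add swap.moveCon (AddCon.refl _ s)
  · simp [hxz, hwy]
  · simp [hyz, hwx, Multiset.cons_swap (q x)]

lemma moveCon_of_map_eq (h : IsFiberProduct p q c d) (hD : 2 ∈ D) {s t : Multiset Ω}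
    (hp : s.map p = t.map p) (hq : s.map q = t.map q) :
    moveCon (glueCon p q K₁ K₂) D s t := by
  induction t using Multiset.induction generalizing s with
  | empty => rw [Multiset.map_eq_zero.1 hp]; exact AddCon.refl _ _
  | cons z t ih =>
    obtain ⟨s', hs', hp', hq'⟩ := h.exists_moveCon_cons hD hp hq
    exact hs'.trans ((moveCon _ D).add (AddCon.refl _ {z}) (ih hp' hq'))

/-- Since `K₁` preserves marginals along `c`, a move in `A` lifts with the `q`-projection kept
fixed. -/
lemma exists_lift_moveCon (h : IsFiberProduct p q c d) (hK : K₁ ≤ mapCon c) {a b : Multiset A}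
    (hab : moveCon K₁ D a b) :
    ∀ s : Multiset Ω, s.map p = a →
      ∃ t, t.map p = b ∧ t.map q = s.map q ∧ moveCon (glueCon p q K₁ K₂) D s t := by
  let Lifts (a b : Multiset A) : Prop := ∀ s : Multiset Ω, s.map p = a →
    ∃ t, t.map p = b ∧ t.map q = s.map q ∧ moveCon (glueCon p q K₁ K₂) D s t
  have lifts_move {a b} (hab : IsMove K₁ D a b) : Lifts a b := by
    rintro s rfl
    obtain ⟨t, rfl, htq⟩ := h.exists_glue ((mapCon_iff.1 (hK hab.1)).symm.trans (h.map_comm s))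
    refine ⟨t, rfl, htq, IsMove.moveCon ⟨glueCon_iff.2 ⟨hab.1, ?_⟩, ?_, ?_⟩⟩
    · exact htq ▸ K₂.refl _
    · simpa using hab.2.1
    · simpa using hab.2.2
  suffices Lifts a b ∧ Lifts b a from this.1
  induction hab with
  | of a b hab => exact ⟨lifts_move hab, lifts_move hab.symm⟩
  | refl a => exact ⟨fun s hs => ⟨s, hs, rfl, AddCon.refl _ s⟩,
      fun s hs => ⟨s, hs, rfl, AddCon.refl _ s⟩⟩
  | symm _ ih => exact ih.symm
  | trans _ _ ih₁ ih₂ =>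
    have trans {a b e} (hab : Lifts a b) (hbe : Lifts b e) : Lifts a e := fun s hs => by
      obtain ⟨t, htp, htq, hst⟩ := hab s hs
      obtain ⟨u, hup, huq, htu⟩ := hbe t htp
      exact ⟨u, hup, huq.trans htq, hst.trans htu⟩
    exact ⟨trans ih₁.1 ih₂.1, trans ih₂.2 ih₁.2⟩
  | add _ _ ih₁ ih₂ =>
    have add {a b a' b'} (hab : Lifts a b) (hab' : Lifts a' b') : Lifts (a + a') (b + b') := by
      intro s hs
      obtain ⟨s₁, s₂, rfl, hs₁, hs₂⟩ := exists_add_of_map_eq_add hs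
      obtain ⟨t₁, htp₁, htq₁, hst₁⟩ := hab s₁ hs₁
      obtain ⟨t₂, htp₂, htq₂, hst₂⟩ := hab' s₂ hs₂
      exact ⟨t₁ + t₂, by simp [htp₁, htp₂], by simp [htq₁, htq₂], AddCon.add _ hst₁ hst₂⟩
    exact ⟨add ih₁.1 ih₂.1, add ih₁.2 ih₂.2⟩

theorem generatedIn_glueCon (h : IsFiberProduct p q c d) (hK₁ : K₁ ≤ mapCon c)
    (hK₂ : K₂ ≤ mapCon d) (hgen₁ : GeneratedIn K₁ D) (hgen₂ : GeneratedIn K₂ D) (hD : 2 ∈ D) :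
    GeneratedIn (glueCon p q K₁ K₂) D := by
  intro s t hst
  obtain ⟨s₁, hp₁, hq₁, hs₁⟩ := h.exists_lift_moveCon hK₁ (hgen₁ hst.1) s rfl
  obtain ⟨s₂, hq₂, hp₂, hs₂⟩ := h.symm.exists_lift_moveCon hK₂ (hgen₂ hst.2) s₁ hq₁
  rw [glueCon_comm] at hs₂
  exact (hs₁.trans hs₂).trans (h.moveCon_of_map_eq hD (hp₂.trans hp₁) hq₂)

end IsFiberProduct

end FiberProducts

section BinaryTables

lemma count_map_eq_add {Ω A : Type*} [DecidableEq Ω] [DecidableEq A] {f : Ω → A} {x x' : Ω}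
    {a : A} (hne : x ≠ x') (hfib : ∀ z, f z = a ↔ z = x ∨ z = x') (s : Multiset Ω) :
    (s.map f).count a = s.count x + s.count x' := by
  induction s using Multiset.induction with
  | empty => simp
  | cons z s ih =>
    simp only [Multiset.map_cons, Multiset.count_cons, ih, eq_comm (a := a), hfib, @eq_comm _ _ z]
    grind

lemma eq_of_map_fst_snd_count {s t : Multiset (Bool × Bool)}
    (hfst : s.map Prod.fst = t.map Prod.fst) (hsnd : s.map Prod.snd = t.map Prod.snd)
    (hcount : s.count (true, true) = t.count (true, true)) : s = t := by
  have count_fst (a : Bool) (s : Multiset (Bool × Bool)) :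
      (s.map Prod.fst).count a = s.count (a, true) + s.count (a, false) :=
    count_map_eq_add (by simp) (by decide +revert) s
  have count_snd (b : Bool) (s : Multiset (Bool × Bool)) :
      (s.map Prod.snd).count b = s.count (true, b) + s.count (false, b) :=
    count_map_eq_add (by simp) (by decide +revert) s
  have row (a : Bool) := congrArg (Multiset.count a) hfst
  have col (b : Bool) := congrArg (Multiset.count b) hsnd
  simp only [count_fst] at row
  simp only [count_snd] at col
  ext ⟨a, b⟩
  have := row true
  have := row false
  have := col true
  cases a <;> cases b <;> omega

lemma eq_diagonal_of_count_lt {s t : Multiset (Bool × Bool)}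
    (hfst : s.map Prod.fst = t.map Prod.fst) (hsnd : s.map Prod.snd = t.map Prod.snd)
    (hcard : s.card = 2) (hcount : s.count (true, true) < t.count (true, true)) :
    s = {(true, false), (false, true)} ∧ t = {(true, true), (false, false)} := by
  have hcard' : t.card = 2 := by simpa [hcard] using (congrArg Multiset.card hfst).symm
  obtain ⟨x, y, rfl⟩ := Multiset.card_eq_two.1 hcard
  obtain ⟨z, w, rfl⟩ := Multiset.card_eq_two.1 hcard'
  decide +revert

end BinaryTables

section ChordRemoval

/-- The closure of `r` under adding a common summand to both sides: one elementary step of the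
congruence generated by `r`. -/
def TranslateRel {M : Type*} [Add M] (r : M → M → Prop) (x y : M) : Prop :=
  ∃ u a b, r a b ∧ x = u + a ∧ y = u + b

lemma TranslateRel.add_left {M : Type*} [AddSemigroup M] {r : M → M → Prop} {x y : M} (v : M) :
    TranslateRel r x y → TranslateRel r (v + x) (v + y) := by
  rintro ⟨u, a, b, hab, rfl, rfl⟩
  exact ⟨v + u, a, b, hab, (add_assoc ..).symm, (add_assoc ..).symm⟩

lemma reflTransGen_translateRel_iff {M : Type*} [AddCommMonoid M] {r : M → M → Prop} [Std.Symm r]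
    {x y : M} : Relation.ReflTransGen (TranslateRel r) x y ↔ addConGen r x y := by
  have : Std.Symm (TranslateRel r) :=
    ⟨fun _ _ ⟨u, a, b, hab, hx, hy⟩ => ⟨u, b, a, symm hab, hy, hx⟩⟩
  refine ⟨fun h => ?_, fun h => ?_⟩
  · induction h with
    | refl => exact AddCon.refl _ x
    | tail _ hyz ih =>
      obtain ⟨u, a, b, hab, rfl, rfl⟩ := hyz
      exact ih.trans ((addConGen r).add (AddCon.refl _ u) (AddConGen.Rel.of a b hab))
  · induction h with
    | of x y h => exact .single ⟨0, x, y, h, (zero_add x).symm, (zero_add y).symm⟩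
    | refl x => exact .refl
    | symm _ ih => exact symm ih
    | trans _ _ ih₁ ih₂ => exact ih₁.trans ih₂
    | @add w x y z _ _ ih₁ ih₂ =>
      refine Relation.ReflTransGen.trans ?_ (ih₂.lift (x + ·) fun _ _ h => h.add_left x)
      simpa only [Function.onFun, add_comm y] using ih₁.lift (y + ·) fun _ _ h => h.add_left y

lemma exists_step_of_le_of_lt {α : Type*} {r : α → α → Prop} {f : α → ℕ} {k : ℕ} {s t : α}
    (h : Relation.ReflTransGen r s t) (hs : f s ≤ k) (ht : k < f t) :
    ∃ x y, Relation.ReflTransGen r s x ∧ r x y ∧ f x ≤ k ∧ k < f y := by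
  induction h with
  | refl => omega
  | @tail y z hsy hyz ih =>
    rcases le_or_gt (f y) k with hy | hy
    · exact ⟨y, z, hsy, hyz, hy, ht⟩
    · exact ih hy

variable {Ω A B : Type*}

/-- The number of states of `s` taking the value `(1, 1)` along the binary chord `c`. -/
def chordCount (c : Ω → Bool × Bool) (s : Multiset Ω) : ℕ :=
  (s.map c).count (true, true)

/-- The congruence of having the same one-way marginals at the two ends of the chord `c`. -/
def endpointCon (c : Ω → Bool × Bool) : AddCon (Multiset Ω) :=
  mapCon (Prod.fst ∘ c) ⊓ mapCon (Prod.snd ∘ c)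

lemma endpointCon_iff {c : Ω → Bool × Bool} {s t : Multiset Ω} :
    endpointCon c s t ↔ (s.map c).map Prod.fst = (t.map c).map Prod.fst ∧
      (s.map c).map Prod.snd = (t.map c).map Prod.snd := by
  simp [endpointCon, AddCon.inf_iff_and, mapCon_iff]

lemma chordCount_add (c : Ω → Bool × Bool) (s t : Multiset Ω) :
    chordCount c (s + t) = chordCount c s + chordCount c t := by
  simp [chordCount]

lemma mapCon_of_chordCount_eq {c : Ω → Bool × Bool} {s t : Multiset Ω}
    (hst : endpointCon c s t) (hcount : chordCount c s = chordCount c t) : mapCon c s t :=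
  eq_of_map_fst_snd_count (endpointCon_iff.1 hst).1 (endpointCon_iff.1 hst).2 hcount

/-- A quadratic move changes the chord count by at most one, so a chain of quadratic moves that
raises it does so first at the current level. -/
lemma exists_move_raising_chordCount {K : AddCon (Multiset Ω)} {c : Ω → Bool × Bool}
    (hK : K ≤ endpointCon c) (hgen : GeneratedIn K {2}) {s t : Multiset Ω} (hst : K s t)
    (hlt : chordCount c s < chordCount c t) :
    ∃ u a b, (K ⊓ mapCon c) s (u + a) ∧ K a b ∧
      a.map c = {(true, false), (false, true)} ∧ b.map c = {(true, true), (false, false)} := by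
  have : Std.Symm (IsMove K {2}) := ⟨fun _ _ => IsMove.symm⟩
  obtain ⟨_, _, hsx, ⟨u, a, b, hab, rfl, rfl⟩, hle, hgt⟩ :=
    exists_step_of_le_of_lt (reflTransGen_translateRel_iff.2 (hgen hst)) le_rfl hlt
  replace hsx : K s (u + a) := moveCon_le (reflTransGen_translateRel_iff.1 hsx)
  simp only [chordCount_add] at hle hgt
  obtain ⟨ha, hb⟩ := eq_diagonal_of_count_lt (s := a.map c) (t := b.map c)
    (endpointCon_iff.1 (hK hab.1)).1 (endpointCon_iff.1 (hK hab.1)).2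
    (by simpa using hab.2.2) (by simp only [chordCount] at hle hgt; omega)
  have hcount : chordCount c s = chordCount c (u + a) := by
    have ha' : chordCount c a = 0 := by rw [chordCount, ha]; decide
    have hb' : chordCount c b = 1 := by rw [chordCount, hb]; decide
    rw [chordCount_add]
    omega
  exact ⟨u, a, b, ⟨hsx, mapCon_of_chordCount_eq (hK hsx) hcount⟩, hab.1, ha, hb⟩

namespace IsFiberProduct

variable {p : Ω → A} {q : Ω → B} {c : A → Bool × Bool} {d : B → Bool × Bool}
  {K₁ : AddCon (Multiset A)} {K₂ : AddCon (Multiset B)} {D : Set ℕ}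

lemma chordCount_comp (h : IsFiberProduct p q c d) (s : Multiset Ω) :
    chordCount d (s.map q) = chordCount c (s.map p) := by
  rw [chordCount, chordCount, h.map_comm]

/-- Raising the chord count by one on both sides gives two quadratic moves with the same chord
values, which glue to a single quadratic move. -/
lemma exists_moveCon_raising_chordCount (h : IsFiberProduct p q c d)
    (hK₁ : K₁ ≤ endpointCon c) (hK₂ : K₂ ≤ endpointCon d)
    (hgen₁ : GeneratedIn K₁ {2}) (hgen₂ : GeneratedIn K₂ {2}) (hD : 2 ∈ D)
    (hgen : GeneratedIn (glueCon p q (K₁ ⊓ mapCon c) (K₂ ⊓ mapCon d)) D)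
    {s t : Multiset Ω} (hst : glueCon p q K₁ K₂ s t)
    (hlt : chordCount c (s.map p) < chordCount c (t.map p)) :
    ∃ s', moveCon (glueCon p q K₁ K₂) D s s' ∧
      chordCount c (s'.map p) = chordCount c (s.map p) + 1 := by
  obtain ⟨u, a, b, hsu, hab, ha, hb⟩ := exists_move_raising_chordCount hK₁ hgen₁ hst.1 hlt
  obtain ⟨u', a', b', hsu', hab', ha', hb'⟩ := exists_move_raising_chordCount hK₂ hgen₂ hst.2
    (by rwa [h.chordCount_comp, h.chordCount_comp])
  have hmap : (u + a).map c = (u' + a').map d :=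
    (mapCon_iff.1 hsu.2).symm.trans ((h.map_comm s).trans (mapCon_iff.1 hsu'.2))
  have hu : u.map c = u'.map d := by simpa [ha, ha'] using hmap
  obtain ⟨v, rfl, rfl⟩ := h.exists_glue hu
  obtain ⟨x, rfl, rfl⟩ := h.exists_glue (ha.trans ha'.symm)
  obtain ⟨y, rfl, rfl⟩ := h.exists_glue (hb.trans hb'.symm)
  have hsx : moveCon (glueCon p q (K₁ ⊓ mapCon c) (K₂ ⊓ mapCon d)) D s (v + x) :=
    hgen (glueCon_iff.2 (by simpa using ⟨hsu, hsu'⟩))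
  have hxy : IsMove (glueCon p q K₁ K₂) D x y := by
    have hx : x.card = 2 := by simpa using congrArg Multiset.card ha
    have hy : y.card = 2 := by simpa using congrArg Multiset.card hb
    exact ⟨⟨hab, hab'⟩, hx.trans hy.symm, hx ▸ hD⟩
  refine ⟨v + y, ?_, ?_⟩
  · refine (moveCon_mono (glueCon_mono inf_le_left inf_le_left) le_rfl hsx).trans ?_
    exact AddCon.add _ (AddCon.refl _ v) hxy.moveCon
  · have hcount : chordCount c (s.map p) = chordCount c (v.map p + x.map p) :=
      congrArg (Multiset.count (true, true)) (mapCon_iff.1 hsu.2)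
    have hx : chordCount c (x.map p) = 0 := by rw [chordCount, ha]; decide
    have hy : chordCount c (y.map p) = 1 := by rw [chordCount, hb]; decide
    rw [hcount, Multiset.map_add, chordCount_add, chordCount_add, hx, hy]

/-- Two tables whose chord counts agree already have the same marginal along the chord, so after
levelling the chord counts it suffices to connect within the gluing along the chord. -/
theorem generatedIn_glueCon_of_chord (h : IsFiberProduct p q c d)
    (hK₁ : K₁ ≤ endpointCon c) (hK₂ : K₂ ≤ endpointCon d)
    (hgen₁ : GeneratedIn K₁ {2}) (hgen₂ : GeneratedIn K₂ {2}) (hD : 2 ∈ D)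
    (hchord₁ : GeneratedIn (K₁ ⊓ mapCon c) D) (hchord₂ : GeneratedIn (K₂ ⊓ mapCon d) D) :
    GeneratedIn (glueCon p q K₁ K₂) D := by
  have hgen := h.generatedIn_glueCon inf_le_right inf_le_right hchord₁ hchord₂ hD
  suffices key : ∀ k s t, glueCon p q K₁ K₂ s t →
      chordCount c (t.map p) = chordCount c (s.map p) + k →
      moveCon (glueCon p q K₁ K₂) D s t by
    intro s t hst
    rcases le_total (chordCount c (s.map p)) (chordCount c (t.map p)) with hle | hle
    · exact key _ s t hst (Nat.add_sub_cancel' hle).symm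
    · exact (key _ t s (AddCon.symm _ hst) (Nat.add_sub_cancel' hle).symm).symm
  intro k
  induction k with
  | zero =>
    intro s t hst hcount
    have hc : mapCon c (s.map p) (t.map p) :=
      mapCon_of_chordCount_eq (hK₁ hst.1) hcount.symm
    have hd : mapCon d (s.map q) (t.map q) := by
      rwa [mapCon_iff, ← h.map_comm, ← h.map_comm]
    exact moveCon_mono (glueCon_mono inf_le_left inf_le_left) le_rfl (hgen ⟨⟨hst.1, hc⟩, hst.2, hd⟩)
  | succ k ih =>
    intro s t hst hcount
    obtain ⟨s', hss', hs'⟩ := h.exists_moveCon_raising_chordCount hK₁ hK₂ hgen₁ hgen₂ hD hgen hst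
      (by omega)
    exact hss'.trans (ih s' t (AddCon.trans _ (AddCon.symm _ (moveCon_le hss')) hst) (by omega))

end IsFiberProduct

end ChordRemoval

section PathsAndCycles

variable {α : Type*} {n : ℕ}

/-- The pair of values of a state at the two ends of the edge `{i, i + 1}` of a path. -/
def pathEdge (i : Fin (n + 1)) (I : Fin (n + 2) → α) : α × α :=
  (I i.castSucc, I i.succ)

/-- The pair of values of a state at the two ends of the edge `{i, i + 1}` of a cycle, the indices
being taken cyclically. -/
def cycleEdge (i : Fin (n + 2)) (I : Fin (n + 2) → α) : α × α :=
  (I i, I (i + 1))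

/-- The edge that closes a path up to a cycle. -/
def closingEdge (I : Fin (n + 2) → α) : α × α :=
  (I (Fin.last (n + 1)), I 0)

/-- The congruence of equal edge marginals on a path with `n + 2` vertices. -/
def pathCon (n : ℕ) (α : Type*) : AddCon (Multiset (Fin (n + 2) → α)) :=
  marginalCon pathEdge

/-- The congruence of equal edge marginals on a cycle with `n + 2` vertices. The degenerate case
`n = 0` starts the inductions. -/
def cycleCon (n : ℕ) (α : Type*) : AddCon (Multiset (Fin (n + 2) → α)) :=
  marginalCon cycleEdge

lemma pathCon_iff {s t : Multiset (Fin (n + 2) → α)} :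
    pathCon n α s t ↔ ∀ i, s.map (pathEdge i) = t.map (pathEdge i) :=
  marginalCon_iff

lemma cycleCon_eq : cycleCon n α = pathCon n α ⊓ mapCon closingEdge := by
  have hlast : (cycleEdge (Fin.last (n + 1)) : (Fin (n + 2) → α) → _) = closingEdge := by
    funext I
    simp [cycleEdge, closingEdge]
  have hcastSucc (i : Fin (n + 1)) :
      (cycleEdge i.castSucc : (Fin (n + 2) → α) → _) = pathEdge i := by
    funext I
    simp [cycleEdge, pathEdge]
  ext s t
  simp only [cycleCon, pathCon, AddCon.inf_iff_and, marginalCon_iff, mapCon_iff,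
    Fin.forall_fin_succ', hlast, hcastSucc]

lemma pathCon_le_mapCon_zero : pathCon n α ≤ mapCon fun I => I 0 := fun _ _ h =>
  mapCon_le_comp Prod.fst (pathEdge 0) (pathCon_iff.1 h 0)

lemma pathCon_le_mapCon_last : pathCon n α ≤ mapCon fun I => I (Fin.last (n + 1)) := fun _ _ h =>
  mapCon_le_comp Prod.snd (pathEdge (Fin.last n)) (pathCon_iff.1 h _)

lemma pathCon_le_endpointCon : pathCon n Bool ≤ endpointCon closingEdge :=
  le_inf pathCon_le_mapCon_last pathCon_le_mapCon_zero

lemma pathCon_zero : pathCon 0 α = ⊥ := by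
  refine le_bot_iff.1 fun s t h => ?_
  have hinj : Function.Injective (pathEdge (0 : Fin 1) : (Fin 2 → α) → α × α) := fun I J h => by
    simpa [pathEdge, funext_iff, Fin.forall_fin_two] using h
  exact mapCon_eq_bot hinj ▸ pathCon_iff.1 h 0

lemma cycleCon_zero : cycleCon 0 α = ⊥ := by
  rw [cycleCon_eq, pathCon_zero, bot_inf_eq]

/-- The edge between the two last vertices of a path. -/
def lastEdge (I : Fin (n + 3) → α) : α × α :=
  pathEdge (Fin.last (n + 1)) I

lemma pathCon_succ : pathCon (n + 1) α = glueCon Fin.init lastEdge (pathCon n α) ⊥ := by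
  ext s t
  have hinit (i : Fin (n + 1)) :
      (pathEdge i ∘ Fin.init : (Fin (n + 3) → α) → _) = pathEdge i.castSucc := rfl
  have hlast : (lastEdge : (Fin (n + 3) → α) → _) = pathEdge (Fin.last (n + 1)) := rfl
  rw [pathCon_iff, glueCon_iff, pathCon_iff, Fin.forall_fin_succ']
  simp only [Multiset.map_map, hinit, hlast]
  rfl

lemma isFiberProduct_init_lastEdge :
    IsFiberProduct (Fin.init : (Fin (n + 3) → α) → _) lastEdge
      (fun I => I (Fin.last (n + 1))) Prod.fst where
  comm _ := rfl
  exists_lift I e h := ⟨Fin.snoc I e.2, Fin.init_snoc .., by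
    rw [lastEdge, pathEdge, Fin.snoc_castSucc, Fin.succ_last, Fin.snoc_last, h]⟩
  ext I J hinit hlast := by
    rw [← Fin.snoc_init_self I, ← Fin.snoc_init_self J, hinit]
    exact congrArg _ (congrArg Prod.snd hlast)

theorem generatedIn_pathCon : ∀ n, GeneratedIn (pathCon n α) {2}
  | 0 => pathCon_zero (α := α) ▸ generatedIn_bot _
  | n + 1 => pathCon_succ (α := α) ▸ isFiberProduct_init_lastEdge.generatedIn_glueCon
      pathCon_le_mapCon_last bot_le (generatedIn_pathCon n) (generatedIn_bot _) rfl

/-- The triangle formed by the two last vertices and vertex `0` of a cycle. -/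
def lastTriangle (I : Fin (n + 3) → α) : Fin 3 → α :=
  ![I (Fin.last (n + 1)).castSucc, I (Fin.last (n + 2)), I 0]

lemma cycleCon_succ_iff {s t : Multiset (Fin (n + 3) → α)} :
    cycleCon (n + 1) α s t ↔ pathCon n α (s.map Fin.init) (t.map Fin.init) ∧
      s.map lastEdge = t.map lastEdge ∧ s.map closingEdge = t.map closingEdge := by
  rw [cycleCon_eq, pathCon_succ]
  exact and_assoc

lemma cycleCon_succ :
    cycleCon (n + 1) α = glueCon Fin.init lastTriangle (pathCon n α) (pathCon 1 α) := by
  ext s t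
  have hlast : (pathEdge 0 ∘ lastTriangle : (Fin (n + 3) → α) → _) = lastEdge := rfl
  have hclosing : (pathEdge 1 ∘ lastTriangle : (Fin (n + 3) → α) → _) = closingEdge := rfl
  rw [cycleCon_succ_iff, glueCon_iff, pathCon_iff (n := 1), Fin.forall_fin_two]
  simp only [Multiset.map_map, hlast, hclosing]

lemma isFiberProduct_init_lastTriangle :
    IsFiberProduct (Fin.init : (Fin (n + 3) → α) → _) lastTriangle
      closingEdge (Prod.swap ∘ closingEdge) where
  comm _ := rfl
  exists_lift I J h := by
    obtain ⟨h₀, h₂⟩ : I (Fin.last (n + 1)) = J 0 ∧ I 0 = J 2 := Prod.ext_iff.1 h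
    let K : Fin (n + 3) → α := Fin.snoc (α := fun _ => α) I (J 1)
    have hinit (i : Fin (n + 2)) : K i.castSucc = I i := Fin.snoc_castSucc (α := fun _ => α) ..
    have hlast : K (Fin.last (n + 2)) = J 1 := Fin.snoc_last (α := fun _ => α) ..
    refine ⟨K, funext hinit, funext (Fin.forall_fin_succ.2 ⟨?_, Fin.forall_fin_two.2 ⟨?_, ?_⟩⟩)⟩
    · exact (hinit _).trans h₀
    · exact hlast
    · exact (hinit 0).trans h₂
  ext I J hinit htri := by
    rw [← Fin.snoc_init_self I, ← Fin.snoc_init_self J, hinit]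
    exact congrArg _ (congrFun htri 1)

end PathsAndCycles

section Triangle

/-- The states of the triangle with a given parity, each taken once. The two classes have the
same edge marginals. -/
def parityClass (b : Bool) : Multiset (Fin 3 → Bool) :=
  (univ.filter fun I => (I 0 ^^ I 1 ^^ I 2) = b).val

lemma count_parityClass (b : Bool) (I : Fin 3 → Bool) :
    (parityClass b).count I = if (I 0 ^^ I 1 ^^ I 2) = b then 1 else 0 := by
  decide +revert

lemma card_parityClass (b : Bool) : (parityClass b).card = 4 := by
  decide +revert

lemma cycleCon_parityClass : cycleCon 1 Bool (parityClass false) (parityClass true) :=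
  marginalCon_iff.2 (by decide)

lemma isMove_parityClass :
    IsMove (cycleCon 1 Bool) {4} (parityClass false) (parityClass true) :=
  ⟨cycleCon_parityClass, (card_parityClass _).trans (card_parityClass _).symm, card_parityClass _⟩

/-- The count difference of two tables with equal edge marginals changes sign under flipping one
vertex, so it is constant up to the sign given by the parity. -/
lemma count_sub_count_of_cycleCon {s t : Multiset (Fin 3 → Bool)} (hst : cycleCon 1 Bool s t)
    (I : Fin 3 → Bool) :
    (s.count I - t.count I : ℤ) = (if (I 0 ^^ I 1 ^^ I 2) = false then 1 else -1) *
      (s.count ![false, false, false] - t.count ![false, false, false]) := by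
  have count_eq (i : Fin 3) (I J : Fin 3 → Bool) (hne : I ≠ J)
      (hfib : ∀ z, cycleEdge i z = cycleEdge i I ↔ z = I ∨ z = J) :
      s.count I + s.count J = t.count I + t.count J := by
    rw [← count_map_eq_add hne hfib, marginalCon_iff.1 hst i, count_map_eq_add hne hfib]
  have flip₀ (b c : Bool) := count_eq 1 ![false, b, c] ![true, b, c] (by simp) (by decide +revert)
  have flip₁ (a c : Bool) := count_eq 2 ![a, false, c] ![a, true, c] (by simp) (by decide +revert)
  have flip₂ (a b : Bool) := count_eq 0 ![a, b, false] ![a, b, true] (by simp) (by decide +revert)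
  obtain ⟨a, b, c, rfl⟩ : ∃ a b c, I = ![a, b, c] := ⟨I 0, I 1, I 2, by decide +revert⟩
  have := flip₀ b c
  have := flip₁ false c
  have := flip₂ false false
  cases a <;> cases b <;> cases c <;> simp <;> omega

lemma exists_nsmul_parityClass_add {s t : Multiset (Fin 3 → Bool)} (hst : cycleCon 1 Bool s t)
    (hle : t.count ![false, false, false] ≤ s.count ![false, false, false]) :
    ∃ (k : ℕ) (u : Multiset (Fin 3 → Bool)),
      s = k • parityClass false + u ∧ t = k • parityClass true + u := by
  obtain ⟨k, hk⟩ := Nat.exists_eq_add_of_le hle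
  have hcount (I : Fin 3 → Bool) := count_sub_count_of_cycleCon hst I
  simp only [hk, Nat.cast_add] at hcount
  refine ⟨k, s - k • parityClass false, ?_, ?_⟩ <;> ext I <;> have := hcount I <;>
    simp only [Multiset.count_add, Multiset.count_sub, Multiset.count_nsmul, count_parityClass]
  all_goals
    cases hI : (I 0 ^^ I 1 ^^ I 2) <;> simp [hI] at this ⊢ <;> omega

theorem generatedIn_cycleCon_triangle : GeneratedIn (cycleCon 1 Bool) {4} := by
  intro s t hst
  wlog hle : t.count ![false, false, false] ≤ s.count ![false, false, false] generalizing s t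
  · exact (this (AddCon.symm _ hst) (le_of_not_ge hle)).symm
  obtain ⟨k, u, rfl, rfl⟩ := exists_nsmul_parityClass_add hst hle
  exact AddCon.add _ (AddCon.nsmul _ k isMove_parityClass.moveCon) (AddCon.refl _ u)

end Triangle

section Cycles

lemma endpointCon_swap {Ω : Type*} (c : Ω → Bool × Bool) :
    endpointCon (Prod.swap ∘ c) = endpointCon c :=
  inf_comm _ _

theorem generatedIn_cycleCon : ∀ n, GeneratedIn (cycleCon n Bool) {2, 4}
  | 0 => cycleCon_zero (α := Bool) ▸ generatedIn_bot _
  | n + 1 => by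
    rw [cycleCon_succ]
    refine isFiberProduct_init_lastTriangle.generatedIn_glueCon_of_chord
      pathCon_le_endpointCon ((endpointCon_swap _).symm ▸ pathCon_le_endpointCon)
      (generatedIn_pathCon n) (generatedIn_pathCon 1) (by simp) ?_ ?_
    · rw [← cycleCon_eq]
      exact generatedIn_cycleCon n
    · rw [mapCon_comp_of_injective Prod.swap_injective, ← cycleCon_eq]
      exact generatedIn_cycleCon_triangle.mono (by simp)

end Cycles

section Rigidity

variable {Ω Ω' : Type*}

/-- Every submultiset of `s` of size at most `d` is alone in its class. No binomial of degree at
most `d` of `K` then involves a monomial dividing the one of `s`. -/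
def IsRigid (K : AddCon (Multiset Ω)) (d : ℕ) (s : Multiset Ω) : Prop :=
  ∀ u ≤ s, u.card ≤ d → ∀ v, K u v → v = u

lemma IsRigid.map {K : AddCon (Multiset Ω)} {K' : AddCon (Multiset Ω')} {d : ℕ}
    {s : Multiset Ω} {e : Ω → Ω'}
    (he : ∀ u v', K' (u.map e) v' → ∃ v, v' = v.map e ∧ K u v) (hs : IsRigid K d s) :
    IsRigid K' d (s.map e) := by
  intro u' hu' hcard v' hv'
  obtain ⟨w', hw'⟩ := Multiset.le_iff_exists_add.1 hu'
  obtain ⟨u, w, rfl, rfl, -⟩ := exists_add_of_map_eq_add hw'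
  obtain ⟨v, rfl, hv⟩ := he u v' hv'
  rw [hs u (Multiset.le_add_right u w) (by simpa using hcard) v hv]

variable {α : Type*} {n : ℕ}

/-- Doubling the last vertex, i.e. subdividing the closing edge of a cycle. -/
def doubleLast (I : Fin (n + 2) → α) : Fin (n + 3) → α :=
  Fin.snoc (α := fun _ => α) I (I (Fin.last (n + 1)))

lemma doubleLast_castSucc (I : Fin (n + 2) → α) (i : Fin (n + 2)) :
    doubleLast I i.castSucc = I i :=
  Fin.snoc_castSucc (α := fun _ => α) ..

lemma doubleLast_last (I : Fin (n + 2) → α) :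
    doubleLast I (Fin.last (n + 2)) = I (Fin.last (n + 1)) :=
  Fin.snoc_last (α := fun _ => α) ..

lemma init_comp_doubleLast : Fin.init ∘ (doubleLast : (Fin (n + 2) → α) → _) = id := by
  funext I i
  exact doubleLast_castSucc I i

lemma closingEdge_comp_doubleLast :
    closingEdge ∘ (doubleLast : (Fin (n + 2) → α) → _) = closingEdge := by
  funext I
  exact Prod.ext (doubleLast_last I) (doubleLast_castSucc I 0)

lemma lastEdge_comp_doubleLast :
    lastEdge ∘ (doubleLast : (Fin (n + 2) → α) → _) = Function.diag ∘ Prod.fst ∘ closingEdge := by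
  funext I
  exact Prod.ext (doubleLast_castSucc I _) (doubleLast_last I)

lemma doubleLast_init {I : Fin (n + 3) → α} (hI : (lastEdge I).1 = (lastEdge I).2) :
    doubleLast (Fin.init I) = I := by
  conv_rhs => rw [← Fin.snoc_init_self I]
  exact congrArg _ hI

lemma cycleCon_map_doubleLast_iff {s t : Multiset (Fin (n + 2) → α)} :
    cycleCon (n + 1) α (s.map doubleLast) (t.map doubleLast) ↔ cycleCon n α s t := by
  rw [cycleCon_succ_iff, cycleCon_eq, AddCon.inf_iff_and, mapCon_iff]
  simp only [Multiset.map_map, init_comp_doubleLast, closingEdge_comp_doubleLast,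
    lastEdge_comp_doubleLast, Multiset.map_id]
  exact and_congr_right fun _ =>
    and_iff_right_of_imp (mapCon_le_comp (Function.diag ∘ Prod.fst) closingEdge ·)

lemma exists_eq_map_doubleLast {s : Multiset (Fin (n + 2) → α)} {t : Multiset (Fin (n + 3) → α)}
    (h : cycleCon (n + 1) α (s.map doubleLast) t) :
    ∃ t' : Multiset (Fin (n + 2) → α), t = t'.map doubleLast := by
  refine ⟨t.map Fin.init, ?_⟩
  have hdiag (I) (hI : I ∈ t) : (lastEdge I).1 = (lastEdge I).2 := by
    have hmem : lastEdge I ∈ (s.map doubleLast).map lastEdge :=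
      (cycleCon_succ_iff.1 h).2.1 ▸ Multiset.mem_map_of_mem _ hI
    rw [Multiset.map_map, lastEdge_comp_doubleLast] at hmem
    obtain ⟨J, -, hJ⟩ := Multiset.mem_map.1 hmem
    rw [← hJ, Function.comp_apply, Function.diag]
  have hmap : t.map (doubleLast ∘ Fin.init) = t.map id :=
    Multiset.map_congr rfl fun I hI => doubleLast_init (hdiag I hI)
  rw [Multiset.map_map, hmap, Multiset.map_id]

lemma isRigid_triangle (s : Multiset (Fin 3 → Bool)) : IsRigid (cycleCon 1 Bool) 3 s := by
  intro u _ hcard v huv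
  have eq_of_nsmul {k : ℕ} {b b' : Bool} {u v w : Multiset (Fin 3 → Bool)}
      (hu : u = k • parityClass b + w) (hv : v = k • parityClass b' + w) (hcard : u.card ≤ 3) :
      v = u := by
    subst hu hv
    have hk : k = 0 := by
      rw [Multiset.card_add, Multiset.card_nsmul, card_parityClass] at hcard
      omega
    simp [hk]
  rcases le_total (v.count ![false, false, false]) (u.count ![false, false, false]) with hle | hle
  · obtain ⟨k, w, hu, hv⟩ := exists_nsmul_parityClass_add huv hle
    exact eq_of_nsmul hu hv hcard
  · obtain ⟨k, w, hv, hu⟩ := exists_nsmul_parityClass_add (AddCon.symm _ huv) hle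
    exact eq_of_nsmul hu hv hcard

theorem exists_isRigid_cycleCon : ∀ n, ∃ s t, cycleCon (n + 1) Bool s t ∧ s ≠ t ∧
    IsRigid (cycleCon (n + 1) Bool) 3 s
  | 0 => ⟨parityClass false, parityClass true, cycleCon_parityClass, by decide,
      isRigid_triangle _⟩
  | n + 1 => by
    obtain ⟨s, t, hst, hne, hs⟩ := exists_isRigid_cycleCon n
    have hinj : Function.Injective (doubleLast : (Fin (n + 3) → Bool) → _) :=
      Function.LeftInverse.injective (congrFun init_comp_doubleLast)
    refine ⟨s.map doubleLast, t.map doubleLast, cycleCon_map_doubleLast_iff.2 hst,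
      (Multiset.map_injective hinj).ne hne, hs.map fun u v h => ?_⟩
    obtain ⟨v, rfl⟩ := exists_eq_map_doubleLast h
    exact ⟨v, rfl, cycleCon_map_doubleLast_iff.1 h⟩

end Rigidity

section MonomialMaps

variable {R σ τ : Type*}

section CommSemiring

variable [CommSemiring R]

variable (R) in
/-- The monomial with a given multiset of variables, repeated according to multiplicity. -/
noncomputable def mon (s : Multiset σ) : MvPolynomial σ R :=
  (s.map X).prod

lemma mon_cons (x : σ) (s : Multiset σ) : mon R (x ::ₘ s) = X x * mon R s := by
  simp [mon]

lemma mon_add (s t : Multiset σ) : mon R (s + t) = mon R s * mon R t := by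
  simp [mon]

lemma mon_toMultiset (m : σ →₀ ℕ) : mon R m.toMultiset = monomial m 1 := by
  rw [mon, Finsupp.toMultiset_map, Finsupp.prod_toMultiset, monomial_eq, C_1, one_mul,
    Finsupp.prod_mapDomain_index (by simp) (by simp [pow_add])]

lemma isHomogeneous_mon (s : Multiset σ) : (mon R s).IsHomogeneous s.card := by
  induction s using Multiset.induction with
  | empty => simpa [mon] using isHomogeneous_one σ R
  | cons x s ih =>
    rw [mon_cons, Multiset.card_cons, add_comm]
    exact (isHomogeneous_X R x).mul ih

lemma exists_eq_toMultiset (s : Multiset σ) : ∃ m : σ →₀ ℕ, s = m.toMultiset := by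
  classical exact ⟨s.toFinsupp, s.toFinsupp_toMultiset.symm⟩

variable (R σ) in
open Classical in
/-- The monomials as a basis indexed by multisets of variables. -/
noncomputable def monBasis : Module.Basis (Multiset σ) R (MvPolynomial σ R) :=
  (basisMonomials σ R).reindex Multiset.toFinsupp.symm.toEquiv

lemma monBasis_apply (s : Multiset σ) : monBasis R σ s = mon R s := by
  obtain ⟨m, rfl⟩ := exists_eq_toMultiset s
  simp [monBasis, mon_toMultiset]

lemma coeff_mon (m : σ →₀ ℕ) (s : Multiset σ) [Decidable (s = m.toMultiset)] :
    coeff m (mon R s) = if s = m.toMultiset then 1 else 0 := by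
  classical
  obtain ⟨m', rfl⟩ := exists_eq_toMultiset s
  rw [mon_toMultiset, coeff_monomial]
  exact if_congr Finsupp.orderIsoMultiset.injective.eq_iff.symm rfl rfl

lemma coeff_eq_zero_of_mem_span {S : Set (MvPolynomial σ R)} {m₀ : σ →₀ ℕ}
    (hS : ∀ f ∈ S, ∀ m ≤ m₀, coeff m f = 0) {f : MvPolynomial σ R} (hf : f ∈ Ideal.span S) :
    ∀ m ≤ m₀, coeff m f = 0 := by
  classical
  induction hf using Submodule.span_induction with
  | mem f hf => exact hS f hf
  | zero => exact fun m _ => coeff_zero m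
  | add f g _ _ hf hg => exact fun m hm => by rw [coeff_add, hf m hm, hg m hm, add_zero]
  | smul a f _ hf =>
    intro m hm
    rw [smul_eq_mul, coeff_mul]
    refine Finset.sum_eq_zero fun x hx => ?_
    rw [hf x.2 ((HasAntidiagonal.antidiagonal.snd_le hx).trans hm), mul_zero]

variable {ψ : MvPolynomial σ R →ₐ[R] MvPolynomial τ R} {θ : Multiset σ →+ Multiset τ}

lemma map_mon (hψ : ∀ x, ψ (X x) = mon R (θ {x})) (s : Multiset σ) :
    ψ (mon R s) = mon R (θ s) := by
  induction s using Multiset.induction with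
  | empty => simp [mon]
  | cons x s ih =>
    rw [mon_cons, map_mul, hψ, ih, ← mon_add, ← map_add, Multiset.singleton_add]

lemma coeff_eq_zero_of_isolated (hψ : ∀ x, ψ (X x) = mon R (θ {x})) {m : σ →₀ ℕ}
    (hm : ∀ v, θ v = θ m.toMultiset → v = m.toMultiset) {f : MvPolynomial σ R} (hf : ψ f = 0) :
    coeff m f = 0 := by
  classical
  obtain ⟨m', hm'⟩ := exists_eq_toMultiset (θ m.toMultiset)
  have hcoeff : lcoeff R m' ∘ₗ ψ.toLinearMap = lcoeff R m := by
    refine (monBasis R σ).ext fun s => ?_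
    simp only [monBasis_apply, LinearMap.comp_apply, AlgHom.toLinearMap_apply, lcoeff_apply,
      map_mon hψ, coeff_mon, ← hm']
    exact if_congr ⟨hm s, congrArg θ⟩ rfl rfl
  simpa [hf] using (LinearMap.congr_fun hcoeff f).symm

end CommSemiring

section CommRing

variable [CommRing R]

/-- The congruence of multisets whose monomials agree modulo the ideal `J`. -/
noncomputable def binomialCon (J : Ideal (MvPolynomial σ R)) : AddCon (Multiset σ) where
  toSetoid := Setoid.ker fun s => Ideal.Quotient.mk J (mon R s)
  add' {_ _ _ _} h₁ h₂ := by
    rw [Setoid.ker_def] at h₁ h₂ ⊢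
    rw [mon_add, mon_add, map_mul, map_mul, h₁, h₂]

lemma binomialCon_iff {J : Ideal (MvPolynomial σ R)} {s t : Multiset σ} :
    binomialCon J s t ↔ mon R s - mon R t ∈ J :=
  Ideal.Quotient.mk_eq_mk_iff_sub_mem _ _

variable {ψ : MvPolynomial σ R →ₐ[R] MvPolynomial τ R} {θ : Multiset σ →+ Multiset τ} {D : Set ℕ}

lemma sub_mem_ker (hψ : ∀ x, ψ (X x) = mon R (θ {x})) {s t : Multiset σ}
    (hst : AddCon.ker θ s t) : mon R s - mon R t ∈ RingHom.ker ψ := by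
  rw [RingHom.mem_ker, map_sub, map_mon hψ, map_mon hψ, (AddCon.ker_rel θ).1 hst, sub_self]

/-- Sending the monomial of `v` to the class of the monomial of a preimage of `v` defines a linear
map `L` for which `L ∘ ψ` is the quotient map. -/
lemma ker_le_of_ker_le_binomialCon (hψ : ∀ x, ψ (X x) = mon R (θ {x}))
    {J : Ideal (MvPolynomial σ R)} (hJ : AddCon.ker θ ≤ binomialCon J) :
    RingHom.ker ψ ≤ J := by
  intro f hf
  let L : MvPolynomial τ R →ₗ[R] MvPolynomial σ R ⧸ J :=
    (monBasis R τ).constr R fun v => Ideal.Quotient.mk J (mon R (Function.invFun θ v))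
  have hL : L ∘ₗ ψ.toLinearMap = (Ideal.Quotient.mkₐ R J).toLinearMap := by
    refine (monBasis R σ).ext fun s => ?_
    simp only [monBasis_apply, LinearMap.comp_apply, AlgHom.toLinearMap_apply, map_mon hψ]
    rw [← monBasis_apply, Module.Basis.constr_basis]
    exact hJ ((AddCon.ker_rel θ).2 (Function.invFun_eq ⟨s, rfl⟩))
  rw [RingHom.mem_ker] at hf
  have hLf := LinearMap.congr_fun hL f
  simp only [LinearMap.comp_apply, AlgHom.toLinearMap_apply, hf, map_zero] at hLf
  exact Ideal.Quotient.eq_zero_iff_mem.1 hLf.symm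

theorem ker_eq_span_of_generatedIn (hψ : ∀ x, ψ (X x) = mon R (θ {x}))
    (hgen : GeneratedIn (AddCon.ker θ) D) :
    RingHom.ker ψ = Ideal.span {f | f ∈ RingHom.ker ψ ∧ ∃ d ∈ D, f.IsHomogeneous d} := by
  refine le_antisymm (ker_le_of_ker_le_binomialCon hψ (hgen.trans ?_))
    (Ideal.span_le.2 fun f hf => hf.1)
  refine AddCon.addConGen_le.2 fun s t hst => binomialCon_iff.2 (Ideal.subset_span ?_)
  exact ⟨sub_mem_ker hψ hst.1, s.card, hst.2.2,
    (isHomogeneous_mon s).sub (hst.2.1 ▸ isHomogeneous_mon t)⟩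

theorem ker_ne_span_of_isRigid [Nontrivial R] (hψ : ∀ x, ψ (X x) = mon R (θ {x})) {d : ℕ}
    {s t : Multiset σ} (hst : AddCon.ker θ s t) (hne : s ≠ t) (hs : IsRigid (AddCon.ker θ) d s) :
    RingHom.ker ψ ≠ Ideal.span {f | f ∈ RingHom.ker ψ ∧ f.totalDegree ≤ d} := by
  classical
  intro hker
  obtain ⟨m₀, rfl⟩ := exists_eq_toMultiset s
  have hcoeff : ∀ m ≤ m₀, coeff m (mon R m₀.toMultiset - mon R t) = 0 := by
    refine coeff_eq_zero_of_mem_span ?_ (hker ▸ sub_mem_ker hψ hst)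
    rintro f ⟨hf, hdeg⟩ m hm
    rcases le_or_gt m.toMultiset.card d with hcard | hcard
    · exact coeff_eq_zero_of_isolated hψ (fun v hv => hs _ (Finsupp.toMultiset_strictMono.monotone
        hm) hcard v ((AddCon.ker_rel θ).2 hv.symm)) hf
    · refine coeff_eq_zero_of_totalDegree_lt (hdeg.trans_lt (hcard.trans_eq ?_))
      rw [Finsupp.card_toMultiset]
      rfl
  simpa [coeff_mon, hne.symm] using hcoeff m₀ le_rfl

end CommRing

end MonomialMaps

section GraphModels

lemma mon_sum_singleton {R σ ι : Type*} [CommSemiring R] (s : Finset ι) (x : ι → σ) :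
    mon R (∑ i ∈ s, {x i}) = ∏ i ∈ s, X (x i) := by
  induction s using Finset.cons_induction with
  | empty => simp [mon]
  | cons i s hi ih => rw [sum_cons, prod_cons, Multiset.singleton_add, mon_cons, ih]

lemma ker_sum_mapAddMonoidHom {ι Ω A : Type*} [Fintype ι] {f : ι → Ω → A}
    (hf : ∀ i j x y, f i x = f j y → i = j) :
    AddCon.ker (∑ i, Multiset.mapAddMonoidHom (f i)) = marginalCon f := by
  classical
  have count_sum (s : Multiset Ω) (i : ι) (x : Ω) :
      (∑ j, s.map (f j)).count (f i x) = (s.map (f i)).count (f i x) := by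
    rw [Multiset.count_sum']
    refine sum_eq_single i (fun j _ hji => Multiset.count_eq_zero_of_notMem fun hx => hji ?_)
      (by simp)
    obtain ⟨y, -, hy⟩ := Multiset.mem_map.1 hx
    exact hf j i y x hy
  ext s t
  simp only [AddCon.ker_rel, AddMonoidHom.finsetSum_apply, Multiset.coe_mapAddMonoidHom,
    marginalCon_iff]
  refine ⟨fun h i => Multiset.ext.2 fun a => ?_, fun h => sum_congr rfl fun i _ => h i⟩
  by_cases ha : a ∈ Set.range (f i)
  · obtain ⟨x, rfl⟩ := ha
    rw [← count_sum, h, count_sum]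
  · have notMem (s : Multiset Ω) : a ∉ s.map (f i) := fun has =>
      ha (Multiset.mem_map.1 has |>.imp fun _ hx => hx.2)
    rw [Multiset.count_eq_zero_of_notMem (notMem s), Multiset.count_eq_zero_of_notMem (notMem t)]

variable {V : Type} {G : SimpleGraph V}

variable (G) in
/-- The features of the binary graph model: the values at the two ends of an edge, or at an isolated
vertex. They are labelled as the variables in the image of `phi`. -/
def graphFeature :
    G.edgeSet ⊕ {l : V // ∀ k, ¬ G.Adj l k} → (V → Bool) → Sym2 (V × Bool) ⊕ (V × Bool)
  | .inl e, I => .inl (e.1.map fun v => (v, I v))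
  | .inr l, I => .inr (l, I l)

variable (G) in
/-- The congruence of equal marginals along all edges and isolated vertices of `G`. -/
def graphCon : AddCon (Multiset (V → Bool)) :=
  marginalCon (graphFeature G)

lemma eq_of_graphFeature_eq (k l : G.edgeSet ⊕ {l : V // ∀ k, ¬ G.Adj l k}) (I J : V → Bool)
    (h : graphFeature G k I = graphFeature G l J) : k = l := by
  have support_graphFeature (k : G.edgeSet ⊕ {l : V // ∀ k, ¬ G.Adj l k}) (I : V → Bool) :
      (graphFeature G k I).map (Sym2.map Prod.fst) Prod.fst = k.map Subtype.val Subtype.val := by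
    rcases k with e | l
    · simp [graphFeature, Sym2.map_map]
    · rfl
  refine (Subtype.val_injective.sumMap Subtype.val_injective) ?_
  rw [← support_graphFeature k I, h, support_graphFeature]

lemma mapCon_graphFeature_inl {u v : V} (h : G.Adj u v) :
    mapCon (graphFeature G (.inl ⟨s(u, v), h⟩)) =
      mapCon fun I : V → Bool => (I u, I v) := by
  have hinj : Function.Injective fun x : Bool × Bool =>
      (Sum.inl s((u, x.1), (v, x.2)) : Sym2 (V × Bool) ⊕ (V × Bool)) := fun x y hxy => by
    have := h.ne
    grind
  exact mapCon_comp_of_injective hinj fun I : V → Bool => (I u, I v)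

lemma graphCon_iff (hG : ∀ u, ∃ v, G.Adj u v) {s t : Multiset (V → Bool)} :
    graphCon G s t ↔ ∀ u v, G.Adj u v →
      s.map (fun I => (I u, I v)) = t.map fun I => (I u, I v) := by
  have : IsEmpty {l : V // ∀ k, ¬ G.Adj l k} := ⟨fun l => (hG l).elim l.2⟩
  simp only [graphCon, marginalCon_iff, Sum.forall, IsEmpty.forall_iff, and_true, Subtype.forall,
    Sym2.forall]
  exact forall₂_congr fun u v => forall_congr' fun h =>
    AddCon.ext_iff.1 (mapCon_graphFeature_inl h) s t

variable [Fintype V] {D : Set ℕ} {d : ℕ}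

variable (G) in
open Classical in
/-- The sufficient statistic of the binary graph model, all marginals being recorded in one
multiset: it is `phi` on the level of exponents. -/
noncomputable def graphStatistic :
    Multiset (V → Bool) →+ Multiset (Sym2 (V × Bool) ⊕ (V × Bool)) :=
  ∑ k, Multiset.mapAddMonoidHom (graphFeature G k)

lemma ker_graphStatistic : AddCon.ker (graphStatistic G) = graphCon G :=
  open Classical in ker_sum_mapAddMonoidHom eq_of_graphFeature_eq

lemma phi_X (I : V → Bool) : phi G (X I) = mon ℂ (graphStatistic G {I}) := by
  classical
  simp only [phi, graphStatistic, aeval_X, AddMonoidHom.finsetSum_apply,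
    Multiset.coe_mapAddMonoidHom, Multiset.map_singleton, mon_sum_singleton, Fintype.prod_sum_type]
  congr 1
  · rw [Finset.prod_subtype (p := (· ∈ G.edgeSet)) _ (by simp)]
    rfl
  · rw [Finset.prod_subtype (p := fun l => ∀ k, ¬ G.Adj l k) _ (by simp)]
    rfl

theorem toricIdeal_eq_span_of_generatedIn (h : GeneratedIn (graphCon G) D) :
    toricIdeal G = Ideal.span {f | f ∈ toricIdeal G ∧ ∃ d ∈ D, f.IsHomogeneous d} :=
  ker_eq_span_of_generatedIn phi_X (ker_graphStatistic (G := G) ▸ h)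

theorem not_genInDegLE_of_isRigid {s t : Multiset (V → Bool)} (hst : graphCon G s t) (hne : s ≠ t)
    (hs : IsRigid (graphCon G) d s) : ¬ GenInDegLE G d := by
  rw [← ker_graphStatistic] at hst hs
  exact ker_ne_span_of_isRigid phi_X hst hne hs

lemma genInDegLE_iff_le : GenInDegLE G d ↔
    toricIdeal G ≤ Ideal.span {f | f ∈ toricIdeal G ∧ f.totalDegree ≤ d} :=
  ⟨fun h => le_of_eq h, fun h => h.antisymm (Ideal.span_le.2 fun _ hf => hf.1)⟩

lemma GenInDegLE.mono {e : ℕ} (h : GenInDegLE G d) (hde : d ≤ e) : GenInDegLE G e :=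
  genInDegLE_iff_le.2 ((genInDegLE_iff_le.1 h).trans
    (Ideal.span_mono fun _ hf => ⟨hf.1, hf.2.trans hde⟩))

lemma genInDegLE_of_generatedIn (h : GeneratedIn (graphCon G) D) (hD : ∀ e ∈ D, e ≤ d) :
    GenInDegLE G d := by
  refine genInDegLE_iff_le.2 ((toricIdeal_eq_span_of_generatedIn h).le.trans (Ideal.span_mono ?_))
  rintro f ⟨hf, e, he, hfe⟩
  exact ⟨hf, hfe.totalDegree_le.trans (hD e he)⟩

lemma markovWidth_eq_succ (h : GenInDegLE G (d + 1)) (hnot : ¬ GenInDegLE G d) :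
    markovWidth G = d + 1 :=
  (Nat.sInf_upward_closed_eq_succ_iff (fun _ _ hle h => GenInDegLE.mono h hle) d).2 ⟨h, hnot⟩

end GraphModels

lemma graphCon_cycleGraph (n : ℕ) :
    graphCon (SimpleGraph.cycleGraph (n + 3)) = cycleCon (n + 1) Bool := by
  have adj_iff (u v : Fin (n + 3)) :
      (SimpleGraph.cycleGraph (n + 3)).Adj u v ↔ u = v + 1 ∨ v = u + 1 := by
    rw [SimpleGraph.cycleGraph_adj, sub_eq_iff_eq_add', sub_eq_iff_eq_add', add_comm v, add_comm u]
  ext s t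
  rw [graphCon_iff fun u => ⟨u + 1, (adj_iff _ _).2 (.inr rfl)⟩, cycleCon, marginalCon_iff]
  refine ⟨fun h i => h i (i + 1) ((adj_iff _ _).2 (.inr rfl)), fun h u v huv => ?_⟩
  rcases (adj_iff u v).1 huv with rfl | rfl
  · exact mapCon_le_comp Prod.swap (cycleEdge v) (h v)
  · exact h u

/-- for `n ≥ 3`, the toric ideal of the `n`-cycle is generated by its
homogeneous elements of degrees 2 and 4, it is not generated in degree `≤ 3`, and hence the
Markov width satisfies `μ(C_n) = 4`. -/
theorem cycle_markovWidth (n : ℕ) (hn : 3 ≤ n) :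
    toricIdeal (SimpleGraph.cycleGraph n) =
      Ideal.span {f : MvPolynomial (Fin n → Bool) ℂ |
        f ∈ toricIdeal (SimpleGraph.cycleGraph n) ∧
          (f.IsHomogeneous 2 ∨ f.IsHomogeneous 4)} ∧
    ¬ GenInDegLE (SimpleGraph.cycleGraph n) 3 ∧
    markovWidth (SimpleGraph.cycleGraph n) = 4 := by
  obtain ⟨N, rfl⟩ : ∃ N, n = N + 3 := ⟨n - 3, by omega⟩
  obtain ⟨s, t, hst, hne, hs⟩ := exists_isRigid_cycleCon N
  rw [← graphCon_cycleGraph] at hst hs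
  have hgen : GeneratedIn (graphCon (SimpleGraph.cycleGraph (N + 3))) {2, 4} :=
    graphCon_cycleGraph N ▸ generatedIn_cycleCon (N + 1)
  have hnot := not_genInDegLE_of_isRigid hst hne hs
  refine ⟨?_, hnot, markovWidth_eq_succ (genInDegLE_of_generatedIn hgen (by simp)) hnot⟩
  simpa using toricIdeal_eq_span_of_generatedIn hgen

end BinaryGraphModels
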